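/- Let R be an associative ring with identity and Q a left rooted quiver. Let W and X be classes of left R-modules such that: X is closed under extensions; (W, W^⊥) is a complete cotorsion pair in Mod(R); and Ext^1_R(X,W) = 0 for all X ∈ X and all W ∈ W ∩ W^⊥. If W is a cogenerator for X, then Φ(W) is a cogenerator for Φ(X) in Rep(Q,R): for every representation X ∈ Φ(X) there is a short exact sequence 0 → X → W → Y → 0 in Rep(Q,R) with W ∈ Φ(W) and Y ∈ Φ(X). -/

import Mathlib

open CategoryTheory CategoryTheory.Limits Opposite
open scoped DirectSum

universe w v u

namespace QuiverGF


section Cat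

variable {A : Type u} [Category.{v} A] [Abelian A]

/-- `Ext¹(X,Y) = 0`, expressed as: every short exact sequence `0 → Y → E → X → 0` splits. -/
def ext1Zero (X Y : A) : Prop :=
  ∀ (E : A) (f : Y ⟶ E) (g : E ⟶ X) (w : f ≫ g = 0),
    (ShortComplex.mk f g w).ShortExact → ∃ s : X ⟶ E, s ≫ g = 𝟙 X

/-- `extHigherZero n X Y` encodes `Ext^{n+1}(X,Y) = 0`, defined by dimension shifting along
short exact sequences `0 → Y → I → Z → 0` with `I` injective. -/
def extHigherZero : ℕ → A → A → Prop
  | 0 => fun X Y => ext1Zero X Y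
  | n + 1 => fun X Y => ∀ (I Z : A) (f : Y ⟶ I) (g : I ⟶ Z) (w : f ≫ g = 0),
      Injective I → (ShortComplex.mk f g w).ShortExact → extHigherZero n X Z

/-- The right `Ext¹`-orthogonal class. -/
def rightPerp (S : Set A) : Set A := {Y | ∀ X ∈ S, ext1Zero X Y}

/-- The left `Ext¹`-orthogonal class. -/
def leftPerp (S : Set A) : Set A := {X | ∀ Y ∈ S, ext1Zero X Y}

/-- `(X, Y)` is a cotorsion pair. -/
structure IsCotorsionPair (X Y : Set A) : Prop where
  right_eq : Y = rightPerp X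
  left_eq : X = leftPerp Y

/-- Completeness of a pair of classes: every object admits approximation sequences. -/
def IsCompleteCP (X Y : Set A) : Prop :=
  (∀ M : A, ∃ (YM XM : A) (f : M ⟶ YM) (g : YM ⟶ XM) (w : f ≫ g = 0),
     (ShortComplex.mk f g w).ShortExact ∧ YM ∈ Y ∧ XM ∈ X) ∧
  (∀ M : A, ∃ (YM XM : A) (f : YM ⟶ XM) (g : XM ⟶ M) (w : f ≫ g = 0),
     (ShortComplex.mk f g w).ShortExact ∧ YM ∈ Y ∧ XM ∈ X)

/-- Heredity: `Ext^i(X,Y) = 0` for all `i ≥ 1`. -/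
def IsHereditaryCP (X Y : Set A) : Prop :=
  ∀ M ∈ X, ∀ N ∈ Y, ∀ n : ℕ, extHigherZero n M N

/-- A thick class of objects. -/
structure IsThick (W : Set A) : Prop where
  summand : ∀ Z ∈ W, ∀ (X : A) (i : X ⟶ Z) (r : Z ⟶ X), i ≫ r = 𝟙 X → X ∈ W
  ext_closed : ∀ (S : ShortComplex A), S.ShortExact → S.X₁ ∈ W → S.X₃ ∈ W → S.X₂ ∈ W
  ker_epi : ∀ (S : ShortComplex A), S.ShortExact → S.X₂ ∈ W → S.X₃ ∈ W → S.X₁ ∈ W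
  coker_mono : ∀ (S : ShortComplex A), S.ShortExact → S.X₁ ∈ W → S.X₂ ∈ W → S.X₃ ∈ W

/-- A Hovey triple. -/
structure IsHoveyTriple (C W F : Set A) : Prop where
  thick : IsThick W
  cp1 : IsCotorsionPair C (W ∩ F)
  cp1_complete : IsCompleteCP C (W ∩ F)
  cp2 : IsCotorsionPair (C ∩ W) F
  cp2_complete : IsCompleteCP (C ∩ W) F

/-- A hereditary Hovey triple. -/
structure IsHereditaryHoveyTriple (C W F : Set A) extends IsHoveyTriple C W F : Prop where
  cp1_hereditary : IsHereditaryCP C (W ∩ F)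
  cp2_hereditary : IsHereditaryCP (C ∩ W) F

/-- `f : C ⟶ M` is an `S`-cover of `M`. -/
def IsCover (S : Set A) {C M : A} (f : C ⟶ M) : Prop :=
  C ∈ S ∧ (∀ C' ∈ S, ∀ g : C' ⟶ M, ∃ h : C' ⟶ C, h ≫ f = g) ∧
    (∀ h : C ⟶ C, h ≫ f = f → IsIso h)

/-- `f : M ⟶ E` is an `S`-envelope of `M`. -/
def IsEnvelope (S : Set A) {M E : A} (f : M ⟶ E) : Prop :=
  E ∈ S ∧ (∀ E' ∈ S, ∀ g : M ⟶ E', ∃ h : E ⟶ E', f ≫ h = g) ∧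
    (∀ h : E ⟶ E, f ≫ h = f → IsIso h)

/-- A perfect pair of classes: X-covers and Y-envelopes always exist. -/
def IsPerfectCP (X Y : Set A) : Prop :=
  (∀ M : A, ∃ (C : A) (f : C ⟶ M), IsCover X f) ∧
  (∀ M : A, ∃ (E : A) (f : M ⟶ E), IsEnvelope Y f)

/-- `W` is a cogenerator for `X`. -/
def IsCogenerator (W X : Set A) : Prop :=
  W ⊆ X ∧ ∀ M ∈ X, ∃ (W' X' : A) (f : M ⟶ W') (g : W' ⟶ X') (w : f ≫ g = 0),
    (ShortComplex.mk f g w).ShortExact ∧ W' ∈ W ∧ X' ∈ X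

end Cat

section Quiver

variable (V : Type w) [Quiver.{w} V]

/-- A quiver is left rooted if it has no infinite sequence of arrows `• → • → • → ⋯`. -/
def LeftRooted : Prop := ¬ ∃ f : ℕ → V, ∀ n : ℕ, Nonempty (f n ⟶ f (n + 1))

variable {V}
variable {A : Type u} [Category.{v} A]

/-- A vertex of `V`, seen as an object of the path category. -/
abbrev vtx (i : V) : Paths V := i

section Phi

variable [Abelian A] [HasCoproducts.{w} A]

/-- The canonical morphism `φᵢˣ : ⊕_{a : j ⟶ i} X(j) ⟶ X(i)`. -/
noncomputable def phi (X : Paths V ⥤ A) (i : V) :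
    (∐ fun p : Σ j : V, j ⟶ i => X.obj (vtx p.1)) ⟶ X.obj (vtx i) :=
  Sigma.desc fun p => X.map p.2.toPath

/-- The class `Φ(S)` of representations. -/
noncomputable def PhiClass (S : Set A) : Set (Paths V ⥤ A) :=
  {X | ∀ i : V, Mono (phi X i) ∧ X.obj (vtx i) ∈ S ∧ cokernel (phi X i) ∈ S}

end Phi

/-- The class of representations with all vertex values in `S`. -/
def RepClass (S : Set A) : Set (Paths V ⥤ A) := {X | ∀ i : V, X.obj (vtx i) ∈ S}

section Psi

variable [Abelian A] [HasProducts.{w} A]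

/-- The canonical morphism `ψᵢʸ : Y(i) ⟶ Π_{a : i ⟶ j} Y(j)`. -/
noncomputable def psi (Y : Paths V ⥤ A) (i : V) :
    Y.obj (vtx i) ⟶ ∏ᶜ fun p : Σ j : V, i ⟶ j => Y.obj (vtx p.1) :=
  Pi.lift fun p => Y.map p.2.toPath

/-- The class `Ψ(S)` of representations. -/
noncomputable def PsiClass (S : Set A) : Set (Paths V ⥤ A) :=
  {Y | ∀ i : V, Epi (psi Y i) ∧ Y.obj (vtx i) ∈ S ∧ kernel (psi Y i) ∈ S}

end Psi

end Quiver




section NcTensor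

variable (R : Type u) [Ring R]

variable (E : Type u) [AddCommGroup E] [Module Rᵐᵒᵖ E]
variable (M : Type u) [AddCommGroup M] [Module R M]

/-- The defining relations of the tensor product `E ⊗_R M` of a right `R`-module `E`
and a left `R`-module `M` over a (possibly noncommutative) ring `R`. -/
def ncRel : Submodule ℤ (TensorProduct ℤ E M) :=
  Submodule.span ℤ {z | ∃ (e : E) (r : R) (m : M),
    z = (MulOpposite.op r • e) ⊗ₜ[ℤ] m - e ⊗ₜ[ℤ] (r • m)}

/-- The tensor product `E ⊗_R M` of a right `R`-module `E` and a left `R`-module `M`. -/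
abbrev NcTensor := TensorProduct ℤ E M ⧸ ncRel R E M

noncomputable instance NcTensor.instAddCommMonoid : AddCommMonoid (NcTensor R E M) :=
  (Submodule.Quotient.addCommGroup (ncRel R E M)).toAddCommMonoid

/-- The canonical generator `e ⊗ m` of `E ⊗_R M`. -/
noncomputable def NcTensor.tmul (e : E) (m : M) : NcTensor R E M :=
  Submodule.Quotient.mk (e ⊗ₜ[ℤ] m)

variable {E M}
variable {E' : Type u} [AddCommGroup E'] [Module Rᵐᵒᵖ E']
variable {M' : Type u} [AddCommGroup M'] [Module R M']

/-- Functoriality of the tensor product. -/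
noncomputable def NcTensor.map (f : E →ₗ[Rᵐᵒᵖ] E') (g : M →ₗ[R] M') :
    NcTensor R E M →ₗ[ℤ] NcTensor R E' M' :=
  Submodule.mapQ _ _
    (TensorProduct.map f.toAddMonoidHom.toIntLinearMap g.toAddMonoidHom.toIntLinearMap)
    (by
      refine Submodule.span_le.2 ?_
      rintro z ⟨e, r, m, rfl⟩
      refine Submodule.mem_comap.2 (Submodule.subset_span ?_)
      exact ⟨f e, r, g m, by
        have h : TensorProduct.map f.toAddMonoidHom.toIntLinearMap g.toAddMonoidHom.toIntLinearMap
            ((MulOpposite.op r • e) ⊗ₜ[ℤ] m - e ⊗ₜ[ℤ] (r • m))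
            = (MulOpposite.op r • f e) ⊗ₜ[ℤ] g m - f e ⊗ₜ[ℤ] (r • g m) := by
          simp [TensorProduct.map_tmul, map_smul]
        exact h⟩)

@[simp] lemma NcTensor.map_tmul (f : E →ₗ[Rᵐᵒᵖ] E') (g : M →ₗ[R] M') (e : E) (m : M) :
    NcTensor.map R f g (NcTensor.tmul R E M e m) = NcTensor.tmul R E' M' (f e) (g m) := by
  rfl

end NcTensor

section ModuleClasses

variable (R : Type u) [Ring R]

/-- A left `R`-module is flat if tensoring with it preserves injections of right `R`-modules. -/
def IsFlatModule (M : ModuleCat.{u} R) : Prop :=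
  ∀ (E E' : ModuleCat.{u} Rᵐᵒᵖ) (f : E ⟶ E'), Function.Injective f →
    Function.Injective (NcTensor.map R (f.hom : ↑E →ₗ[Rᵐᵒᵖ] ↑E') (LinearMap.id (M := ↑M)))

/-- Gorenstein flat left `R`-modules: cycles of exact complexes of flat modules which stay
exact after tensoring with any injective right `R`-module. -/
def IsGorensteinFlatModule (M : ModuleCat.{u} R) : Prop :=
  ∃ (F : ℤ → ModuleCat.{u} R) (d : ∀ n : ℤ, F n ⟶ F (n + 1)),
    (∀ n, IsFlatModule R (F n)) ∧
    (∀ n, Function.Exact (d n) (d (n + 1))) ∧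
    Nonempty (↑M ≃ₗ[R] ↥(LinearMap.ker ((d 0).hom : ↑(F 0) →ₗ[R] ↑(F (0 + 1))))) ∧
    ∀ (E : ModuleCat.{u} Rᵐᵒᵖ), Injective E → ∀ n : ℤ,
      Function.Exact (NcTensor.map R (LinearMap.id (M := ↑E)) ((d n).hom : ↑(F n) →ₗ[R] ↑(F (n + 1))))
        (NcTensor.map R (LinearMap.id (M := ↑E)) ((d (n + 1)).hom : ↑(F (n + 1)) →ₗ[R] ↑(F (n + 1 + 1))))

/-- Projectively coresolved Gorenstein flat left `R`-modules. -/
def IsPGFModule (M : ModuleCat.{u} R) : Prop :=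
  ∃ (P : ℤ → ModuleCat.{u} R) (d : ∀ n : ℤ, P n ⟶ P (n + 1)),
    (∀ n, Projective (P n)) ∧
    (∀ n, Function.Exact (d n) (d (n + 1))) ∧
    Nonempty (↑M ≃ₗ[R] ↥(LinearMap.ker ((d 0).hom : ↑(P 0) →ₗ[R] ↑(P (0 + 1))))) ∧
    ∀ (E : ModuleCat.{u} Rᵐᵒᵖ), Injective E → ∀ n : ℤ,
      Function.Exact (NcTensor.map R (LinearMap.id (M := ↑E)) ((d n).hom : ↑(P n) →ₗ[R] ↑(P (n + 1))))
        (NcTensor.map R (LinearMap.id (M := ↑E)) ((d (n + 1)).hom : ↑(P (n + 1)) →ₗ[R] ↑(P (n + 1 + 1))))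

/-- Gorenstein injective objects of an abelian category. -/
def IsGorensteinInjective {A : Type*} [Category A] [Abelian A] (M : A) : Prop :=
  ∃ (I : ℤ → A) (d : ∀ n : ℤ, I n ⟶ I (n + 1)),
    (∀ n, Injective (I n)) ∧
    (∀ n, ∃ w : d n ≫ d (n + 1) = 0, (ShortComplex.mk (d n) (d (n + 1)) w).Exact) ∧
    Nonempty (M ≅ kernel (d 0)) ∧
    ∀ (E : A), Injective E → ∀ n : ℤ,
      Function.Exact (fun f : E ⟶ I n => f ≫ d n) (fun f : E ⟶ I (n + 1) => f ≫ d (n + 1))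

end ModuleClasses



section Char

variable (R : Type u) [Ring R] (G : Type u) [AddCommGroup G]

section Left
variable (M : Type u) [AddCommGroup M] [Module R M]

/-- Right `R`-action on `Hom_ℤ(M, G)` for a left `R`-module `M`. -/
instance : SMul Rᵐᵒᵖ (M →+ G) :=
  ⟨fun r f => f.comp (DistribMulAction.toAddMonoidHom M r.unop)⟩

@[simp] lemma op_smul_addHom_apply (r : Rᵐᵒᵖ) (f : M →+ G) (m : M) :
    (r • f) m = f (r.unop • m) := rfl

instance charRight : Module Rᵐᵒᵖ (M →+ G) where
  one_smul f := AddMonoidHom.ext fun m => by simp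
  mul_smul r s f := AddMonoidHom.ext fun m => by simp [mul_smul]
  smul_zero r := AddMonoidHom.ext fun m => rfl
  smul_add r f g := AddMonoidHom.ext fun m => rfl
  add_smul r s f := AddMonoidHom.ext fun m => by simp [add_smul]
  zero_smul f := AddMonoidHom.ext fun m => by simp

end Left

section Right
variable (N : Type u) [AddCommGroup N] [Module Rᵐᵒᵖ N]

/-- Left `R`-action on `Hom_ℤ(N, G)` for a right `R`-module `N`. -/
instance : SMul R (N →+ G) :=
  ⟨fun r f => f.comp (DistribMulAction.toAddMonoidHom N (MulOpposite.op r))⟩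

@[simp] lemma smul_addHom_apply (r : R) (f : N →+ G) (n : N) :
    (r • f) n = f (MulOpposite.op r • n) := rfl

instance charLeft : Module R (N →+ G) where
  one_smul f := AddMonoidHom.ext fun n => by simp
  mul_smul r s f := AddMonoidHom.ext fun n => by simp [MulOpposite.op_mul, mul_smul]
  smul_zero r := AddMonoidHom.ext fun n => rfl
  smul_add r f g := AddMonoidHom.ext fun n => rfl
  add_smul r s f := AddMonoidHom.ext fun n => by simp [add_smul]
  zero_smul f := AddMonoidHom.ext fun n => by simp

end Right

section Precomp

variable {R G}
variable {M N : Type u} [AddCommGroup M] [AddCommGroup N] [Module R M] [Module R N]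

/-- Precomposition, as an `Rᵐᵒᵖ`-linear map between character modules. -/
def precompHom (h : M →ₗ[R] N) : (N →+ G) →ₗ[Rᵐᵒᵖ] (M →+ G) where
  toFun f := f.comp h.toAddMonoidHom
  map_add' f g := rfl
  map_smul' r f := AddMonoidHom.ext fun m => by simp [map_smul]

variable {P Q : Type u} [AddCommGroup P] [AddCommGroup Q] [Module Rᵐᵒᵖ P] [Module Rᵐᵒᵖ Q]

/-- Precomposition, as an `R`-linear map between character modules of right modules. -/
def precompHomOp (h : P →ₗ[Rᵐᵒᵖ] Q) : (Q →+ G) →ₗ[R] (P →+ G) where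
  toFun f := f.comp h.toAddMonoidHom
  map_add' f g := rfl
  map_smul' r f := AddMonoidHom.ext fun p => by simp [map_smul]

end Precomp

end Char


section Reps

variable (V : Type u) [Quiver.{u} V] (R : Type u) [Ring R]

/-- The category of representations of the quiver `V` with values in left `R`-modules. -/
abbrev RepL := Paths V ⥤ ModuleCat.{u} R

/-- The category of representations of the opposite quiver with values in right `R`-modules. -/
abbrev RepR := Paths Vᵒᵖ ⥤ ModuleCat.{u} Rᵐᵒᵖ

/-- A vertex of `V`, seen as an object of the path category. -/
abbrev vtx' {V : Type u} [Quiver.{u} V] (i : V) : Paths V := i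

/-- The representation `Hom(X, G) ∈ Rep(Qᵒᵖ, Rᵒᵖ)`, given vertexwise by `Hom_ℤ(X(i), G)`. -/
noncomputable def HomRepObj (X : RepL V R) (G : Type u) [AddCommGroup G] : RepR V R :=
  Paths.lift
    { obj := fun x => ModuleCat.of Rᵐᵒᵖ (↑(X.obj (vtx' x.unop)) →+ G)
      map := fun {x y} a =>
        ModuleCat.ofHom (precompHom (G := G) ((X.map a.unop.toPath).hom : ↑(X.obj (vtx' y.unop)) →ₗ[R] ↑(X.obj (vtx' x.unop))) :
          _ →ₗ[Rᵐᵒᵖ] _) }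

/-- The representation `Hom(Y, G) ∈ Rep(Q, R)` for `Y ∈ Rep(Qᵒᵖ, Rᵒᵖ)`. -/
noncomputable def HomRepObjOp (Y : RepR V R) (G : Type u) [AddCommGroup G] : RepL V R :=
  Paths.lift
    { obj := fun i => ModuleCat.of R (↑(Y.obj (vtx' (op i))) →+ G)
      map := fun {i j} a =>
        ModuleCat.ofHom (precompHomOp (G := G) ((Y.map a.op.toPath).hom : ↑(Y.obj (vtx' (op j))) →ₗ[Rᵐᵒᵖ] ↑(Y.obj (vtx' (op i)))) :
          _ →ₗ[R] _) }

/-- The character representation `X⁺ = Hom(X, ℚ/ℤ)`. -/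
noncomputable def charRep (X : RepL V R) : RepR V R :=
  HomRepObj V R X (ULift.{u} (AddCircle (1 : ℚ)))

section Tensor

variable {V R}

/-- The underlying group of the tensor product of representations before dividing out
by the relations coming from arrows. -/
noncomputable abbrev repTensorBase (Y : RepR V R) (X : RepL V R) : Type u :=
  ⨁ (i : V), NcTensor R (↑(Y.obj (vtx' (op i)))) (↑(X.obj (vtx' i)))

open scoped Classical in
/-- The relations defining the tensor product of representations. -/
noncomputable def repTensorRel (Y : RepR V R) (X : RepL V R) :
    Submodule ℤ (repTensorBase Y X) :=
  Submodule.span ℤ {z | ∃ (i j : V) (a : i ⟶ j) (y : ↑(Y.obj (vtx' (op j)))) (x : ↑(X.obj (vtx' i))),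
    z = DirectSum.of _ i (NcTensor.tmul R _ _ (Y.map a.op.toPath y) x)
      - DirectSum.of _ j (NcTensor.tmul R _ _ y (X.map a.toPath x))}

/-- The tensor product `Y ⊗_Q X` of representations, for `Y ∈ Rep(Qᵒᵖ, Rᵒᵖ)` and
`X ∈ Rep(Q, R)`. -/
noncomputable abbrev RepTensor (Y : RepR V R) (X : RepL V R) : Type u :=
  repTensorBase Y X ⧸ repTensorRel Y X

open scoped Classical in
/-- Functoriality of the tensor product of representations. -/
noncomputable def RepTensor.map {Y Y' : RepR V R} {X X' : RepL V R}
    (g : Y ⟶ Y') (f : X ⟶ X') : RepTensor Y X →ₗ[ℤ] RepTensor Y' X' :=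
  Submodule.mapQ _ _
    (DirectSum.toModule ℤ V (repTensorBase Y' X') fun i =>
      (DirectSum.lof ℤ V _ i).comp
        (NcTensor.map R ((g.app (vtx' (op i))).hom : _ →ₗ[Rᵐᵒᵖ] _) ((f.app (vtx' i)).hom : _ →ₗ[R] _)))
    (by
      refine Submodule.span_le.2 ?_
      rintro z ⟨i, j, a, y, x, rfl⟩
      refine Submodule.mem_comap.2 ?_
      rw [map_sub, ← DirectSum.lof_eq_of ℤ, ← DirectSum.lof_eq_of ℤ,
        DirectSum.toModule_lof, DirectSum.toModule_lof]
      refine Submodule.subset_span ?_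
      refine ⟨i, j, a, g.app (vtx' (op j)) y, f.app (vtx' i) x, ?_⟩
      have hg : g.app (vtx' (op i)) (Y.map a.op.toPath y)
          = Y'.map a.op.toPath (g.app (vtx' (op j)) y) := by
        have h := g.naturality (a.op.toPath : vtx' (op j) ⟶ vtx' (op i))
        exact ConcreteCategory.congr_hom h y
      have hf : f.app (vtx' j) (X.map a.toPath x)
          = X'.map a.toPath (f.app (vtx' i) x) := by
        have h := f.naturality (a.toPath : vtx' i ⟶ vtx' j)
        exact ConcreteCategory.congr_hom h x
      simp only [LinearMap.comp_apply, NcTensor.map_tmul, DirectSum.lof_eq_of]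
      rw [hg, hf])

end Tensor

end Reps




section More

variable (V : Type u) [Quiver.{u} V] (R : Type u) [Ring R]

/-- Cotorsion left `R`-modules. -/
def IsCotorsionModule (M : ModuleCat.{u} R) : Prop :=
  ∀ F : ModuleCat.{u} R, IsFlatModule R F → ext1Zero F M

/-- A right coherent ring: every finitely generated right ideal is finitely presented. -/
def RightCoherent : Prop :=
  ∀ I : Submodule Rᵐᵒᵖ R, I.FG → Module.FinitePresentation Rᵐᵒᵖ ↥I

/-- Flat representations: colimits of projective representations. -/
def IsFlatRep (Xr : RepL V R) : Prop :=
  ∃ (J : Cat.{u, u}) (D : ↥J ⥤ RepL V R) (c : Limits.Cocone D),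
    (∀ j, Projective (D.obj j)) ∧ Nonempty (Limits.IsColimit c) ∧ Nonempty (c.pt ≅ Xr)

/-- Gorenstein flat representations. -/
def IsGorensteinFlatRep (Xr : RepL V R) : Prop :=
  ∃ (F : ℤ → RepL V R) (d : ∀ n : ℤ, F (n + 1) ⟶ F n),
    (∀ n, IsFlatRep V R (F n)) ∧
    (∀ n, ∃ w : d (n + 1) ≫ d n = 0, (ShortComplex.mk (d (n + 1)) (d n) w).Exact) ∧
    Nonempty (Xr ≅ cokernel (d 0)) ∧
    ∀ (E : RepR V R), Injective E → ∀ n : ℤ,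
      Function.Exact (RepTensor.map (𝟙 E) (d (n + 1))) (RepTensor.map (𝟙 E) (d n))

/-- Projectively coresolved Gorenstein flat representations. -/
def IsPGFRep (Xr : RepL V R) : Prop :=
  ∃ (P : ℤ → RepL V R) (d : ∀ n : ℤ, P (n + 1) ⟶ P n),
    (∀ n, Projective (P n)) ∧
    (∀ n, ∃ w : d (n + 1) ≫ d n = 0, (ShortComplex.mk (d (n + 1)) (d n) w).Exact) ∧
    Nonempty (Xr ≅ cokernel (d 0)) ∧
    ∀ (E : RepR V R), Injective E → ∀ n : ℤ,
      Function.Exact (RepTensor.map (𝟙 E) (d (n + 1))) (RepTensor.map (𝟙 E) (d n))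

end More

section Swap

variable (R : Type u) [Ring R]
variable (M : Type u) [AddCommGroup M] [Module R M]
variable (E : Type u) [AddCommGroup E] [Module Rᵐᵒᵖ E]

/-- Relations for the tensor product `M ⊗_{Rᵒᵖ} E` of a right `Rᵒᵖ`-module `M`
and a left `Rᵒᵖ`-module `E`. -/
def ncRel' : Submodule ℤ (TensorProduct ℤ M E) :=
  Submodule.span ℤ {z | ∃ (m : M) (r : R) (e : E),
    z = (r • m) ⊗ₜ[ℤ] e - m ⊗ₜ[ℤ] (MulOpposite.op r • e)}

/-- The tensor product `M ⊗_{Rᵒᵖ} E`. -/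
abbrev NcTensorSwap := TensorProduct ℤ M E ⧸ ncRel' R M E

noncomputable instance NcTensorSwap.instAddCommMonoid : AddCommMonoid (NcTensorSwap R M E) :=
  (Submodule.Quotient.addCommGroup (ncRel' R M E)).toAddCommMonoid

variable {M E}

/-- The generator `m ⊗ e` of `M ⊗_{Rᵒᵖ} E`. -/
noncomputable def NcTensorSwap.tmul (m : M) (e : E) : NcTensorSwap R M E :=
  Submodule.Quotient.mk (m ⊗ₜ[ℤ] e)

variable (V : Type u) [Quiver.{u} V]

/-- The base of the tensor product `X ⊗_{Qᵒᵖ} Y`. -/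
noncomputable abbrev repTensorSwapBase (X : RepL V R) (Y : RepR V R) : Type u :=
  ⨁ (i : V), NcTensorSwap R (↑(X.obj i)) (↑(Y.obj (op i)))

open scoped Classical in
/-- The relations of the tensor product `X ⊗_{Qᵒᵖ} Y`. -/
noncomputable def repTensorSwapRel (X : RepL V R) (Y : RepR V R) :
    Submodule ℤ (repTensorSwapBase R V X Y) :=
  Submodule.span ℤ {z | ∃ (j i : V) (a : j ⟶ i) (x : ↑(X.obj j)) (y : ↑(Y.obj (op i))),
    z = DirectSum.of _ i (NcTensorSwap.tmul R (X.map a.toPath x) y)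
      - DirectSum.of _ j (NcTensorSwap.tmul R x (Y.map a.op.toPath y))}

/-- The tensor product `X ⊗_{Qᵒᵖ} Y` of representations, i.e. the tensor product over the
opposite quiver of the opposite ring. -/
noncomputable abbrev RepTensorSwap (X : RepL V R) (Y : RepR V R) : Type u :=
  repTensorSwapBase R V X Y ⧸ repTensorSwapRel R V X Y

end Swap

section Eval

variable {V : Type u} [Quiver.{u} V] {R : Type u} [Ring R]

/-- Evaluation helper identifying the vertex value of `Hom(X, G)` with `Hom_ℤ(X(i), G)`. -/
def homRepEval (X : RepL V R) (G : Type u) [AddCommGroup G] {v : Vᵒᵖ}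
    (s : ↑((HomRepObj V R X G).obj v)) : ↑(X.obj v.unop) →+ G := s

/-- Evaluation helper identifying the vertex value of `Hom(Y, G)` with `Hom_ℤ(Y(i), G)`. -/
def homRepOpEval (Y : RepR V R) (G : Type u) [AddCommGroup G] {i : V}
    (s : ↑((HomRepObjOp V R Y G).obj i)) : ↑(Y.obj (op i)) →+ G := s

end Eval

end QuiverGF

section Statements

open CategoryTheory CategoryTheory.Limits Opposite QuiverGF
open scoped DirectSum

/-! Let `𝒴 = 𝒲^⊥`. Embed each `X(i)` into some `E i` and each cokernel of `phi X i` into some `T i`,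
both in the core `𝒲 ∩ 𝒴`, with cokernels in `𝒳`. With `B j = E j ⊞ T j` and `I j` the set of arrows
into `j`, the required representation has the values `B j ⊞ G^(I j)`, where `G` lies in `𝒲` and, for
every `j`, contains `P j ⊞ G^(I j)` as a direct summand, `P j` being an object of `𝒲` containing the
cokernel of `X(j) ⟶ B j`. This circular demand on `G` is met by a Hilbert hotel, the coproduct of
the `P j` over all words in the arrows.

Along an arrow `a : j ⟶ i`, an extension of `X(j) ⟶ X(i) ⟶ E i` to the value at `j` is paired with
the map that kills `X(j)` and sends the rest of that value into the copy of `G` indexed by `a`. A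
morphism from the source of `phi` to an object of the core then extends along `phi`: its restriction
to `X` extends through `E i`, and the difference, which vanishes on `X`, through the copies of `G`.
Approximating objects of `𝒴` by objects of the core, `phi` has extensions into all of `𝒴`, hence is
a monomorphism with cokernel in `𝒲`. Since `T i` splits off that cokernel, the map induced by
`X(i) ⟶ B i ⊞ G^(I i)` on cokernels of `phi` is again a monomorphism with cokernel in `𝒳`.
-/

namespace QuiverGF

open scoped ZeroObject

section ShortExact

variable {A : Type u} [Category.{v} A] [Abelian A]

theorem exact_of_forall_exists_desc {X Y Z : A} {f : X ⟶ Y} {g : Y ⟶ Z} (w : f ≫ g = 0) [Epi g]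
    (h : ∀ {T : A} (k : Y ⟶ T), f ≫ k = 0 → ∃ l : Z ⟶ T, g ≫ l = k) :
    (ShortComplex.mk f g w).Exact :=
  ShortComplex.exact_of_g_is_cokernel _ <| CokernelCofork.IsColimit.ofπ _ _
    (fun k hk => (h k hk).choose) (fun k hk => (h k hk).choose_spec)
    (fun k hk _ hm => (cancel_epi g).1 (hm.trans (h k hk).choose_spec.symm))

theorem exists_shortExact_cokernel_comp {X Y Z C D : A} {f : X ⟶ Y} {p : Y ⟶ C} {wf : f ≫ p = 0}
    (hf : (ShortComplex.mk f p wf).ShortExact) {g : Y ⟶ Z} {q : Z ⟶ D} {wg : g ≫ q = 0}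
    (hg : (ShortComplex.mk g q wg).ShortExact) :
    ∃ (k : C ⟶ cokernel (f ≫ g)) (r : cokernel (f ≫ g) ⟶ D) (w : k ≫ r = 0),
      cokernel.π (f ≫ g) ≫ r = q ∧ (ShortComplex.mk k r w).ShortExact := by
  have := hf.epi_g
  have := hg.mono_f
  have := hg.epi_g
  obtain ⟨k, hk⟩ : ∃ k : C ⟶ cokernel (f ≫ g), p ≫ k = g ≫ cokernel.π (f ≫ g) :=
    ⟨hf.exact.desc _ (by simp [← Category.assoc]), hf.exact.g_desc _ _⟩
  obtain ⟨r, hr⟩ : ∃ r : cokernel (f ≫ g) ⟶ D, cokernel.π (f ≫ g) ≫ r = q :=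
    ⟨cokernel.desc _ q (by simp [wg]), cokernel.π_desc _ _ _⟩
  have w : k ≫ r = 0 := by rw [← cancel_epi p, reassoc_of% hk, hr, wg, comp_zero]
  have hepi : Epi r := epi_of_epi_fac hr
  have hmono : Mono k := Preadditive.mono_of_cancel_zero _ fun x hx => by
    obtain ⟨_, π, _, y, hy⟩ := surjective_up_to_refinements_of_epi p x
    obtain ⟨_, π', _, z, hz⟩ :=
      (ShortComplex.exact_cokernel (f ≫ g)).exact_up_to_refinements (y ≫ g)
        (by rw [Category.assoc]; dsimp; rw [← hk, ← reassoc_of% hy, hx, comp_zero])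
    have hyf : π' ≫ y = z ≫ f := by simpa [← Category.assoc, cancel_mono] using hz
    rw [← cancel_epi π, ← cancel_epi π', hy, reassoc_of% hyf, wf]
    simp
  refine ⟨k, r, w, hr, ShortComplex.ShortExact.mk' (exact_of_forall_exists_desc w fun h hh => ?_)
    hmono hepi⟩
  have hgh : g ≫ cokernel.π (f ≫ g) ≫ h = 0 := by rw [← reassoc_of% hk, hh, comp_zero]
  exact ⟨hg.exact.desc _ hgh, by
    rw [← cancel_epi (cokernel.π (f ≫ g)), reassoc_of% hr]; exact hg.exact.g_desc _ _⟩

theorem exists_shortExact_cokernel_of_comp {N E B X C : A} {n : N ⟶ E} {q : E ⟶ B}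
    {wq : n ≫ q = 0} (hq : (ShortComplex.mk n q wq).ShortExact) {f : X ⟶ E} {p : B ⟶ C}
    {w : (f ≫ q) ≫ p = 0} (hf : (ShortComplex.mk (f ≫ q) p w).ShortExact) :
    ∃ (r : cokernel f ⟶ C) (w' : (n ≫ cokernel.π f) ≫ r = 0),
      (ShortComplex.mk (n ≫ cokernel.π f) r w').ShortExact := by
  have := hq.mono_f
  have : Epi q := hq.epi_g
  have : Mono (f ≫ q) := hf.mono_f
  have : Epi p := hf.epi_g
  obtain ⟨r, hr⟩ : ∃ r : cokernel f ⟶ C, cokernel.π f ≫ r = q ≫ p :=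
    ⟨cokernel.desc f (q ≫ p) (by simpa using w), cokernel.π_desc _ _ _⟩
  have w' : (n ≫ cokernel.π f) ≫ r = 0 := by
    rw [Category.assoc, hr, reassoc_of% wq, zero_comp]
  have hmono : Mono (n ≫ cokernel.π f) := Preadditive.mono_of_cancel_zero _ fun x hx => by
    obtain ⟨_, π, _, y, hy⟩ := (ShortComplex.exact_cokernel f).exact_up_to_refinements (x ≫ n)
      (by simpa using hx)
    replace hy : π ≫ x ≫ n = y ≫ f := hy
    have hy_zero : y = 0 := by
      rw [← cancel_mono (f ≫ q), zero_comp, ← reassoc_of% hy, wq, comp_zero, comp_zero]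
    rw [← cancel_epi π, ← cancel_mono n, Category.assoc, hy, hy_zero, zero_comp, comp_zero,
      zero_comp]
  have hepi : Epi r := epi_of_epi_fac hr
  refine ⟨r, w', ShortComplex.ShortExact.mk' (exact_of_forall_exists_desc w' fun h hh => ?_)
    hmono hepi⟩
  obtain ⟨h', hh'⟩ : ∃ h' : B ⟶ _, q ≫ h' = cokernel.π f ≫ h :=
    ⟨hq.exact.desc _ (by simpa using hh), hq.exact.g_desc _ _⟩
  obtain ⟨h'', hh''⟩ : ∃ h'' : C ⟶ _, p ≫ h'' = h' :=
    ⟨hf.exact.desc h' (by simp [hh']), hf.exact.g_desc _ _⟩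
  exact ⟨h'', by rw [← cancel_epi (cokernel.π f), reassoc_of% hr, hh'', hh']⟩

end ShortExact

section Ext

variable {A : Type u} [Category.{v} A] [Abelian A]

theorem exists_shortExact_pullback_snd {N E B X : A} {n : N ⟶ E} {q : E ⟶ B} {w : n ≫ q = 0}
    (hq : (ShortComplex.mk n q w).ShortExact) (g : X ⟶ B) :
    ∃ (i : N ⟶ pullback q g) (w' : i ≫ pullback.snd q g = 0),
      (ShortComplex.mk i (pullback.snd q g) w').ShortExact := by
  have := hq.mono_f
  have := hq.epi_g
  obtain ⟨i, hi_fst, hi_snd⟩ :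
      ∃ i : N ⟶ pullback q g, i ≫ pullback.fst q g = n ∧ i ≫ pullback.snd q g = 0 :=
    ⟨pullback.lift n 0 (by simpa using w), pullback.lift_fst _ _ _, pullback.lift_snd _ _ _⟩
  refine ⟨i, hi_snd, ShortComplex.ShortExact.mk' ?_ (mono_of_mono_fac hi_fst) inferInstance⟩
  rw [ShortComplex.exact_iff_exact_up_to_refinements]
  intro T x (hx : x ≫ pullback.snd q g = 0)
  obtain ⟨T', π, hπ, y, hy⟩ := hq.exact.exact_up_to_refinements (x ≫ pullback.fst q g)
    (by dsimp; rw [Category.assoc, pullback.condition, reassoc_of% hx, zero_comp])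
  exact ⟨T', π, hπ, y, pullback.hom_ext (by simpa [hi_fst] using hy) (by simp [hx, hi_snd])⟩

theorem ext1Zero.exists_lift {X N : A} (h : ext1Zero X N) {E B : A} {n : N ⟶ E} {q : E ⟶ B}
    {w : n ≫ q = 0} (hq : (ShortComplex.mk n q w).ShortExact) (g : X ⟶ B) :
    ∃ l : X ⟶ E, l ≫ q = g := by
  obtain ⟨_, _, hS⟩ := exists_shortExact_pullback_snd hq g
  obtain ⟨s, hs⟩ := h _ _ _ _ hS
  exact ⟨s ≫ pullback.fst q g, by
    rw [Category.assoc, pullback.condition, reassoc_of% hs]⟩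

theorem ext1Zero.of_unop {X Y : Aᵒᵖ} (h : ext1Zero Y.unop X.unop) : ext1Zero X Y := by
  intro E f g w hS
  obtain ⟨s, hs⟩ := h _ _ _ _ hS.unop
  let σ := ShortComplex.Splitting.ofExactOfSection _ hS.unop.exact s hs hS.unop.mono_f
  exact ⟨σ.r.op, Quiver.Hom.unop_inj σ.f_r⟩

theorem ext1Zero.of_op {X Y : A} (h : ext1Zero (Opposite.op Y) (Opposite.op X)) : ext1Zero X Y := by
  intro E f g w hS
  obtain ⟨s, hs⟩ := h _ _ _ _ hS.op
  let σ := ShortComplex.Splitting.ofExactOfSection _ hS.op.exact s hs hS.op.mono_f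
  exact ⟨σ.r.unop, Quiver.Hom.op_inj σ.f_r⟩

theorem ext1Zero.exists_extension {C N : A} (h : ext1Zero C N) {X Y : A} {f : X ⟶ Y} {p : Y ⟶ C}
    {w : f ≫ p = 0} (hf : (ShortComplex.mk f p w).ShortExact) (g : X ⟶ N) :
    ∃ l : Y ⟶ N, f ≫ l = g := by
  have hop : ext1Zero (Opposite.op N) (Opposite.op C) := .of_unop h
  obtain ⟨l, hl⟩ := hop.exists_lift hf.op g.op
  exact ⟨l.unop, Quiver.Hom.op_inj hl⟩

theorem ext1Zero.of_shortExact_right {X N₁ N₂ N₃ : A} {f : N₁ ⟶ N₂} {p : N₂ ⟶ N₃} {w : f ≫ p = 0}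
    (hf : (ShortComplex.mk f p w).ShortExact) (h₁ : ext1Zero X N₁) (h₃ : ext1Zero X N₃) :
    ext1Zero X N₂ := by
  intro E i q wi hi
  have := hf.mono_f
  have := hi.mono_f
  obtain ⟨k, r, wk, hr, hkr⟩ := exists_shortExact_cokernel_comp hf hi
  obtain ⟨s, hs⟩ := h₃ _ _ _ _ hkr
  obtain ⟨l, hl⟩ := h₁.exists_lift
    (ShortComplex.ShortExact.mk' (ShortComplex.exact_cokernel (f ≫ i))
      (inferInstanceAs (Mono (f ≫ i))) (inferInstanceAs (Epi (cokernel.π _)))) s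
  exact ⟨l, by rw [← hr, reassoc_of% hl, hs]⟩

theorem ext1Zero.of_shortExact_left {X₁ X₂ X₃ N : A} {f : X₁ ⟶ X₂} {p : X₂ ⟶ X₃} {w : f ≫ p = 0}
    (hf : (ShortComplex.mk f p w).ShortExact) (h₁ : ext1Zero X₁ N) (h₃ : ext1Zero X₃ N) :
    ext1Zero X₂ N :=
  .of_op (.of_shortExact_right hf.op (.of_unop h₃) (.of_unop h₁))

theorem ext1Zero.of_retract {X Y N : A} (r : Retract X Y) (h : ext1Zero Y N) : ext1Zero X N := by
  intro E f g w hS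
  obtain ⟨l, hl⟩ := h.exists_lift hS r.r
  exact ⟨r.i ≫ l, by rw [Category.assoc, hl, r.retract]⟩

theorem ext1Zero.biprod {X Y N : A} (hX : ext1Zero X N) (hY : ext1Zero Y N) :
    ext1Zero (X ⊞ Y) N := by
  intro E f g w hS
  obtain ⟨l, hl⟩ := hX.exists_lift hS biprod.inl
  obtain ⟨m, hm⟩ := hY.exists_lift hS biprod.inr
  exact ⟨biprod.desc l m, by ext <;> simp [hl, hm]⟩

theorem ext1Zero.sigma {J : Type*} {X : J → A} [HasCoproduct X] {N : A}
    (h : ∀ j, ext1Zero (X j) N) : ext1Zero (∐ X) N := by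
  intro E f g w hS
  choose l hl using fun j => (h j).exists_lift hS (Sigma.ι X j)
  exact ⟨Sigma.desc l, by ext j; simp [hl]⟩

/-- A morphism has extensions into a class `S` when every morphism from its source to an object of
`S` extends along it; for a monomorphism with cokernel `C`, this follows from `Ext¹(C, S) = 0`. -/
def HasExtensions (S : Set A) {X Y : A} (f : X ⟶ Y) : Prop :=
  ∀ N ∈ S, ∀ g : X ⟶ N, ∃ l : Y ⟶ N, f ≫ l = g

theorem ext1Zero.of_exists_extension {X Y C N : A} {f : X ⟶ Y} {p : Y ⟶ C} [Epi p]
    {w : f ≫ p = 0} (hf : (ShortComplex.mk f p w).Exact) (hY : ext1Zero Y N)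
    (h : ∀ g : X ⟶ N, ∃ l : Y ⟶ N, f ≫ l = g) : ext1Zero C N := by
  intro E i q wi hi
  have := hi.mono_f
  obtain ⟨l, hl⟩ := hY.exists_lift hi p
  obtain ⟨a, ha⟩ : ∃ a : X ⟶ N, a ≫ i = f ≫ l :=
    ⟨hi.exact.lift (f ≫ l) (by simp [hl, w]), hi.exact.lift_f _ _⟩
  obtain ⟨m, hm⟩ := h a
  have hfs : f ≫ (l - m ≫ i) = 0 := by
    rw [Preadditive.comp_sub, reassoc_of% hm, ha, sub_self]
  have hps : p ≫ hf.desc (l - m ≫ i) hfs = l - m ≫ i := hf.g_desc _ _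
  exact ⟨hf.desc (l - m ≫ i) hfs, by
    rw [← cancel_epi p, reassoc_of% hps]; simp [hl, wi]⟩

end Ext

section Classes

variable {A : Type u} [Category.{v} A] [Abelian A]

/-- Closure of a class of objects under extensions. -/
def IsClosedUnderExtensions (S : Set A) : Prop :=
  ∀ T : ShortComplex A, T.ShortExact → T.X₁ ∈ S → T.X₃ ∈ S → T.X₂ ∈ S

theorem IsClosedUnderExtensions.mem_of_iso {S : Set A} (hS : IsClosedUnderExtensions S)
    (h0 : (0 : A) ∈ S) {X Y : A} (e : X ≅ Y) (hX : X ∈ S) : Y ∈ S := by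
  have hzero : (0 : (0 : A) ⟶ Y) ≫ e.inv = 0 := zero_comp
  refine hS (ShortComplex.mk _ _ hzero) (ShortComplex.ShortExact.mk' ?_ ?_ ?_) h0 hX
  · exact (ShortComplex.exact_iff_mono _ rfl).2 (inferInstanceAs (Mono e.inv))
  · exact inferInstanceAs (Mono (0 : (0 : A) ⟶ Y))
  · exact inferInstanceAs (Epi e.inv)

/-- The monomorphisms with cokernel in the class `S`. The cokernel is an arbitrary short exact
completion rather than `cokernel f`, as `S` is not assumed to be closed under isomorphisms. -/
def IsMonoWithCokernelIn (S : Set A) {X Y : A} (f : X ⟶ Y) : Prop :=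
  ∃ (C : A) (p : Y ⟶ C) (w : f ≫ p = 0), (ShortComplex.mk f p w).ShortExact ∧ C ∈ S

namespace IsMonoWithCokernelIn

variable {S : Set A} {X Y Z : A} {f : X ⟶ Y}

theorem mono (h : IsMonoWithCokernelIn S f) : Mono f :=
  let ⟨_, _, _, hf, _⟩ := h
  hf.mono_f

theorem of_cokernel_mem (f : X ⟶ Y) [Mono f] (h : cokernel f ∈ S) : IsMonoWithCokernelIn S f :=
  ⟨cokernel f, cokernel.π f, cokernel.condition f,
    .mk' (ShortComplex.exact_cokernel f) inferInstance (inferInstanceAs (Epi (cokernel.π f))), h⟩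

theorem mem_of_shortExact (h : IsMonoWithCokernelIn S f) (hS : IsClosedUnderExtensions S)
    (h0 : (0 : A) ∈ S) {D : A} {q : Y ⟶ D} {w : f ≫ q = 0}
    (hf : (ShortComplex.mk f q w).ShortExact) : D ∈ S :=
  let ⟨_, _, _, hf', hC⟩ := h
  hS.mem_of_iso h0 (hf'.gIsCokernel.coconePointUniqueUpToIso hf.gIsCokernel) hC

theorem comp (hf : IsMonoWithCokernelIn S f) (hS : IsClosedUnderExtensions S) {g : Y ⟶ Z}
    (hg : IsMonoWithCokernelIn S g) : IsMonoWithCokernelIn S (f ≫ g) := by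
  have := hf.mono
  have := hg.mono
  obtain ⟨C, p, _, hfp, hC⟩ := hf
  obtain ⟨D, q, _, hgq, hD⟩ := hg
  obtain ⟨_, _, _, _, hCD⟩ := exists_shortExact_cokernel_comp hfp hgq
  exact .of_cokernel_mem _ (hS _ hCD hC hD)

theorem of_comp (hS : IsClosedUnderExtensions S) {N : A} {n : N ⟶ Y} {q : Y ⟶ Z} {w : n ≫ q = 0}
    (hq : (ShortComplex.mk n q w).ShortExact) (hN : N ∈ S) (h : IsMonoWithCokernelIn S (f ≫ q)) :
    IsMonoWithCokernelIn S f := by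
  have := h.mono
  have : Mono f := mono_of_mono f q
  obtain ⟨C, p, _, hfq, hC⟩ := h
  obtain ⟨_, _, hNC⟩ := exists_shortExact_cokernel_of_comp hq hfq
  exact .of_cokernel_mem _ (hS _ hNC hN hC)

theorem of_comp_biprod_fst (hS : IsClosedUnderExtensions S) {f : X ⟶ Y ⊞ Z} (hZ : Z ∈ S)
    (h : IsMonoWithCokernelIn S (f ≫ biprod.fst)) : IsMonoWithCokernelIn S f :=
  .of_comp hS (n := biprod.inr) (w := biprod.inr_fst)
    (ShortComplex.Splitting.shortExact ⟨biprod.snd, biprod.inl, biprod.inr_snd, biprod.inl_fst,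
      by rw [add_comm]; exact biprod.total⟩) hZ h

theorem hasExtensions (h : IsMonoWithCokernelIn S f) {T : Set A}
    (hST : ∀ C ∈ S, ∀ N ∈ T, ext1Zero C N) : HasExtensions T f := by
  obtain ⟨C, p, _, hf, hC⟩ := h
  exact fun N hN g => (hST C hC N hN).exists_extension hf g

end IsMonoWithCokernelIn

end Classes

section CotorsionPair

variable {A : Type u} [Category.{v} A] [Abelian A] {𝒲 𝒴 : Set A}

namespace IsCotorsionPair

theorem ext1Zero (h : IsCotorsionPair 𝒲 𝒴) {X Y : A} (hX : X ∈ 𝒲) (hY : Y ∈ 𝒴) : ext1Zero X Y :=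
  (h.right_eq ▸ hY : Y ∈ rightPerp 𝒲) X hX

theorem mem_left (h : IsCotorsionPair 𝒲 𝒴) {X : A} (hX : ∀ Y ∈ 𝒴, QuiverGF.ext1Zero X Y) :
    X ∈ 𝒲 :=
  h.left_eq ▸ hX

theorem mem_right (h : IsCotorsionPair 𝒲 𝒴) {Y : A} (hY : ∀ X ∈ 𝒲, QuiverGF.ext1Zero X Y) :
    Y ∈ 𝒴 :=
  h.right_eq ▸ hY

theorem zero_mem (h : IsCotorsionPair 𝒲 𝒴) : (0 : A) ∈ 𝒲 :=
  h.mem_left fun _ _ _ _ _ _ _ => ⟨0, (isZero_zero A).eq_of_src _ _⟩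

theorem isClosedUnderExtensions_left (h : IsCotorsionPair 𝒲 𝒴) : IsClosedUnderExtensions 𝒲 :=
  fun _ hT h₁ h₃ => h.mem_left fun _ hY => .of_shortExact_left hT (h.ext1Zero h₁ hY)
    (h.ext1Zero h₃ hY)

theorem isClosedUnderExtensions_right (h : IsCotorsionPair 𝒲 𝒴) : IsClosedUnderExtensions 𝒴 :=
  fun _ hT h₁ h₃ => h.mem_right fun _ hX => .of_shortExact_right hT (h.ext1Zero hX h₁)
    (h.ext1Zero hX h₃)

theorem mem_left_of_retract (h : IsCotorsionPair 𝒲 𝒴) {X Y : A} (r : Retract X Y) (hY : Y ∈ 𝒲) :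
    X ∈ 𝒲 :=
  h.mem_left fun _ hN => .of_retract r (h.ext1Zero hY hN)

theorem biprod_mem_left (h : IsCotorsionPair 𝒲 𝒴) {X Y : A} (hX : X ∈ 𝒲) (hY : Y ∈ 𝒲) :
    (X ⊞ Y) ∈ 𝒲 :=
  h.mem_left fun _ hN => .biprod (h.ext1Zero hX hN) (h.ext1Zero hY hN)

theorem sigma_mem_left (h : IsCotorsionPair 𝒲 𝒴) {J : Type*} {X : J → A} [HasCoproduct X]
    (hX : ∀ j, X j ∈ 𝒲) : ∐ X ∈ 𝒲 :=
  h.mem_left fun _ hN => .sigma fun j => h.ext1Zero (hX j) hN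

variable {X Y : A} {f : X ⟶ Y}

theorem hasExtensions_of_core (h : IsCotorsionPair 𝒲 𝒴) (hc : IsCompleteCP 𝒲 𝒴) (hX : X ∈ 𝒲)
    (hf : HasExtensions (𝒲 ∩ 𝒴) f) : HasExtensions 𝒴 f := by
  intro N hN g
  obtain ⟨K, W, i, q, _, hW, hK, hWW⟩ := hc.2 N
  have hW𝒴 : W ∈ 𝒴 := h.isClosedUnderExtensions_right _ hW hK hN
  obtain ⟨g', hg'⟩ := (h.ext1Zero hX hK).exists_lift hW g
  obtain ⟨l, hl⟩ := hf W ⟨hWW, hW𝒴⟩ g'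
  exact ⟨l ≫ q, by rw [reassoc_of% hl, hg']⟩

theorem cokernel_mem_left (h : IsCotorsionPair 𝒲 𝒴) (hY : Y ∈ 𝒲) (hf : HasExtensions 𝒴 f) :
    cokernel f ∈ 𝒲 :=
  h.mem_left fun N hN => .of_exists_extension (ShortComplex.exact_cokernel f)
    (h.ext1Zero hY hN) (hf N hN)

end IsCotorsionPair

theorem IsCompleteCP.mono_of_hasExtensions (hc : IsCompleteCP 𝒲 𝒴) {X Y : A} {f : X ⟶ Y}
    (hf : HasExtensions 𝒴 f) : Mono f := by
  obtain ⟨N, _, j, _, _, hj, hN, _⟩ := hc.1 X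
  have : Mono j := hj.mono_f
  obtain ⟨l, hl⟩ := hf N hN j
  exact mono_of_mono_fac hl

theorem exists_isMonoWithCokernelIn_core {𝒳 : Set A} (h : IsCotorsionPair 𝒲 𝒴)
    (hc : IsCompleteCP 𝒲 𝒴) (h𝒳 : IsClosedUnderExtensions 𝒳) (hcog : IsCogenerator 𝒲 𝒳)
    {M : A} (hM : M ∈ 𝒳) :
    ∃ E ∈ 𝒲 ∩ 𝒴, ∃ f : M ⟶ E, IsMonoWithCokernelIn 𝒳 f := by
  obtain ⟨W, C, f, p, w, hf, hW, hC⟩ := hcog.2 M hM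
  obtain ⟨E, D, g, q, w', hg, hE, hD⟩ := hc.1 W
  exact ⟨E, ⟨h.isClosedUnderExtensions_left _ hg hW hD, hE⟩, f ≫ g,
    .comp ⟨C, p, w, hf, hC⟩ h𝒳 ⟨D, q, w', hg, hcog.1 hD⟩⟩

end CotorsionPair

section CokernelMap

variable {A : Type u} [Category.{v} A] [Abelian A]

theorem mono_τ₃_of_mono_cokernelMap {S₁ S₂ : ShortComplex A} (φ : S₁ ⟶ S₂) [Epi S₁.g]
    (h₂ : S₂.Exact) (hτ₂ : Mono φ.τ₂)
    (hC : Mono (cokernel.map φ.τ₁ φ.τ₂ S₁.f S₂.f φ.comm₁₂)) :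
    Mono φ.τ₃ := Preadditive.mono_of_cancel_zero _ fun x hx => by
  obtain ⟨_, π, _, y, hy⟩ := surjective_up_to_refinements_of_epi S₁.g x
  obtain ⟨_, π', _, z, hz⟩ := h₂.exact_up_to_refinements (y ≫ φ.τ₂)
    (by rw [Category.assoc, φ.comm₂₃, ← reassoc_of% hy, hx, comp_zero])
  have hzπ : z ≫ cokernel.π φ.τ₁ = 0 := by
    rw [← cancel_mono (cokernel.map φ.τ₁ φ.τ₂ S₁.f S₂.f φ.comm₁₂)]
    simp [← reassoc_of% hz]
  obtain ⟨_, π'', _, t, ht⟩ := (ShortComplex.exact_cokernel φ.τ₁).exact_up_to_refinements z hzπ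
  have hyt : π'' ≫ π' ≫ y = t ≫ S₁.f := by
    rw [← cancel_mono φ.τ₂, Category.assoc, Category.assoc, Category.assoc, hz, reassoc_of% ht,
      φ.comm₁₂]
  rw [← cancel_epi π, ← cancel_epi π', ← cancel_epi π'', hy, reassoc_of% hyt, S₁.zero]
  simp only [comp_zero]

theorem shortExact_cokernelMap {S₁ S₂ : ShortComplex A} (φ : S₁ ⟶ S₂) [Epi S₁.g]
    (h₂ : S₂.ShortExact) (hC : Mono (cokernel.map φ.τ₁ φ.τ₂ S₁.f S₂.f φ.comm₁₂)) :
    (ShortComplex.mk (cokernel.map φ.τ₁ φ.τ₂ S₁.f S₂.f φ.comm₁₂)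
      (cokernel.map φ.τ₂ φ.τ₃ S₁.g S₂.g φ.comm₂₃) (by ext; simp)).ShortExact := by
  have := h₂.epi_g
  have hepi : Epi (cokernel.map φ.τ₂ φ.τ₃ S₁.g S₂.g φ.comm₂₃) :=
    epi_of_epi_fac (cokernel.π_desc _ _ _)
  refine .mk' (exact_of_forall_exists_desc _ fun h hh => ?_) hC hepi
  have hf : S₂.f ≫ cokernel.π φ.τ₂ ≫ h = 0 := by simpa using cokernel.π φ.τ₁ ≫= hh
  have hg : S₂.g ≫ h₂.exact.desc _ hf = cokernel.π φ.τ₂ ≫ h := h₂.exact.g_desc _ hf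
  have hτ₃ : φ.τ₃ ≫ h₂.exact.desc _ hf = 0 := by
    rw [← cancel_epi S₁.g, ← reassoc_of% φ.comm₂₃, hg]
    simp
  exact ⟨cokernel.desc _ _ hτ₃, by ext; simp [hg]⟩

theorem IsCotorsionPair.isMonoWithCokernelIn_cokernelMap {𝒲 𝒴 𝒳 : Set A}
    (h : IsCotorsionPair 𝒲 𝒴) (h𝒳 : IsClosedUnderExtensions 𝒳) (h𝒲𝒳 : 𝒲 ⊆ 𝒳) {X₁ X₂ W₁ W₂ T : A}
    {f : X₁ ⟶ X₂} {g : W₁ ⟶ W₂} {a : X₁ ⟶ W₁} {b : X₂ ⟶ W₂} (w : f ≫ b = a ≫ g)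
    (hg : cokernel g ∈ 𝒲) {τ : W₂ ⟶ T} {s : T ⟶ W₂} (hs : s ≫ τ = 𝟙 T) (hgτ : g ≫ τ = 0)
    {t : cokernel f ⟶ T} (ht : IsMonoWithCokernelIn 𝒳 t) (hbτ : b ≫ τ = cokernel.π f ≫ t) :
    IsMonoWithCokernelIn 𝒳 (cokernel.map f g a b w) := by
  let τ' : cokernel g ⟶ T := cokernel.desc g τ hgτ
  have hsτ' : (s ≫ cokernel.π g) ≫ τ' = 𝟙 T := by simp [τ', hs]
  have : Epi τ' := epi_of_epi_fac hsτ'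
  have hτ' : (ShortComplex.mk (kernel.ι τ') τ' (kernel.condition τ')).ShortExact :=
    .mk' (ShortComplex.exact_kernel τ') (inferInstanceAs (Mono (kernel.ι τ'))) this
  let σ := ShortComplex.Splitting.ofExactOfSection _ hτ'.exact _ hsτ' hτ'.mono_f
  have hker : kernel τ' ∈ 𝒲 := h.mem_left_of_retract ⟨kernel.ι τ', σ.r, σ.f_r⟩ hg
  refine .of_comp h𝒳 hτ' (h𝒲𝒳 hker) ?_
  have hfac : cokernel.map f g a b w ≫ τ' = t := by ext; simp [τ', hbτ]
  rwa [hfac]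

end CokernelMap

section Representations

variable {V : Type w} [Quiver.{w} V] {A : Type u} [Category.{v} A] [HasCoproducts.{w} A]

theorem ι_comp_phi (X : Paths V ⥤ A) {i : V} (p : Σ j : V, j ⟶ i) :
    Sigma.ι (fun p : Σ j : V, j ⟶ i => X.obj (vtx p.1)) p ≫ phi X i = X.map p.2.toPath :=
  Limits.Sigma.ι_desc _ _

theorem sigmaMap_comp_phi {X Y : Paths V ⥤ A} (f : X ⟶ Y) (i : V) :
    Limits.Sigma.map (fun p : Σ j : V, j ⟶ i => f.app (vtx p.1)) ≫ phi Y i =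
      phi X i ≫ f.app (vtx i) := by
  ext p
  simp [phi]

variable [Abelian A] {𝒲 𝒳 𝒴 : Set A}

theorem mem_phiClass_of_shortExact (h𝒳 : IsClosedUnderExtensions 𝒳) (h0 : (0 : A) ∈ 𝒳)
    {S : ShortComplex (Paths V ⥤ A)} (hS : S.ShortExact) (hφ : ∀ i, Mono (phi S.X₂ i))
    (hf : ∀ i, IsMonoWithCokernelIn 𝒳 (S.f.app (vtx i)))
    (hC : ∀ i, IsMonoWithCokernelIn 𝒳 (cokernel.map (phi S.X₁ i) (phi S.X₂ i)
      (Limits.Sigma.map fun p => S.f.app (vtx p.1)) (S.f.app (vtx i))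
      (sigmaMap_comp_phi S.f i).symm)) :
    S.X₃ ∈ PhiClass (V := V) 𝒳 := by
  intro i
  have hSi (j : V) : (S.map ((evaluation _ A).obj (vtx j))).ShortExact := hS.map_of_exact _
  have (j : V) : Epi (S.g.app (vtx j)) := (hSi j).epi_g
  have hzero (j : V) : S.f.app (vtx j) ≫ S.g.app (vtx j) = 0 :=
    (S.map ((evaluation (Paths V) A).obj (vtx j))).zero
  let coprodRow : ShortComplex A :=
    .mk (Limits.Sigma.map fun p : Σ j : V, j ⟶ i => S.f.app (vtx p.1))
      (Limits.Sigma.map fun p : Σ j : V, j ⟶ i => S.g.app (vtx p.1))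
      (by ext p; simp [reassoc_of% (hzero p.1)])
  let φ : coprodRow ⟶ S.map ((evaluation _ A).obj (vtx i)) :=
    { τ₁ := phi S.X₁ i
      τ₂ := phi S.X₂ i
      τ₃ := phi S.X₃ i
      comm₁₂ := (sigmaMap_comp_phi S.f i).symm
      comm₂₃ := (sigmaMap_comp_phi S.g i).symm }
  have : Epi coprodRow.g :=
    inferInstanceAs (Epi (Limits.Sigma.map fun p : Σ j : V, j ⟶ i => S.g.app (vtx p.1)))
  exact ⟨mono_τ₃_of_mono_cokernelMap φ (hSi i).exact (hφ i) (hC i).mono,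
    (hf i).mem_of_shortExact h𝒳 h0 (hSi i),
    (hC i).mem_of_shortExact h𝒳 h0 (shortExact_cokernelMap φ (hSi i) (hC i).mono)⟩

end Representations

section Absorber

variable {A : Type u} [Category.{v} A] [Abelian A] [HasCoproducts.{w} A] {V : Type w}

/-- Hilbert's hotel: the coproduct of the `P j` over all finite words in the letters `⟨j, a⟩`,
which contains a copy of `P j` and of `I j`-many copies of itself, for all `j` at once. -/
noncomputable abbrev absorber (P : V → A) (I : V → Type w) : A :=
  ∐ fun x : V × List (Σ j, I j) => P x.1

/-- The hotel absorbs the guests `P j` and, for each `a : I j`, a copy of itself: `P j` takes the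
room of the empty word, and the room `l` of the copy indexed by `a` becomes `⟨j, a⟩ :: l`. -/
noncomputable def absorberRetractSigma (P : V → A) (I : V → Type w) :
    Retract (∐ fun j => P j ⊞ ∐ fun _ : I j => absorber P I) (absorber P I) where
  i := Limits.Sigma.desc fun j => biprod.desc
    (Sigma.ι (fun x : V × List (Σ j, I j) => P x.1) (j, []))
    (Limits.Sigma.desc fun a => Limits.Sigma.desc fun x =>
      Sigma.ι (fun x : V × List (Σ j, I j) => P x.1) (x.1, ⟨j, a⟩ :: x.2))
  r := Limits.Sigma.desc fun
    | (v, []) => biprod.inl ≫ Sigma.ι (fun j => P j ⊞ ∐ fun _ : I j => absorber P I) v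
    | (v, ⟨j, a⟩ :: l) => Sigma.ι (fun x : V × List (Σ j, I j) => P x.1) (v, l) ≫
        Sigma.ι (fun _ : I j => absorber P I) a ≫ biprod.inr ≫
          Sigma.ι (fun j => P j ⊞ ∐ fun _ : I j => absorber P I) j
  retract := by
    refine Limits.Sigma.hom_ext _ _ fun j => biprod.hom_ext' _ _ ?_ ?_
    · rw [Sigma.ι_desc_assoc, biprod.inl_desc_assoc, Sigma.ι_desc, Category.comp_id]
    · refine Limits.Sigma.hom_ext _ _ fun a => Limits.Sigma.hom_ext _ _ fun x => ?_
      rw [Sigma.ι_desc_assoc, biprod.inr_desc_assoc, Sigma.ι_desc_assoc, Sigma.ι_desc_assoc,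
        Sigma.ι_desc, Category.comp_id]

/-- The absorber has `P j ⊞ (absorber P I)^(I j)` as a direct summand. -/
noncomputable def absorberRetract (P : V → A) (I : V → Type w) (j : V) :
    Retract (P j ⊞ ∐ fun _ : I j => absorber P I) (absorber P I) :=
  open Classical in
  .trans ⟨Sigma.ι (fun j => P j ⊞ ∐ fun _ : I j => absorber P I) j, Sigma.π _ j, by simp⟩
    (absorberRetractSigma P I)

theorem exists_absorbing_cokernel {𝒲 𝒳 𝒴 : Set A} (h : IsCotorsionPair 𝒲 𝒴)
    (hcog : IsCogenerator 𝒲 𝒳) (hext : ∀ X ∈ 𝒳, ∀ N ∈ 𝒲 ∩ 𝒴, ext1Zero X N) {X B : V → A}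
    {b : ∀ j, X j ⟶ B j} (hb : ∀ j, IsMonoWithCokernelIn 𝒳 (b j)) (I : V → Type w) :
    ∃ G ∈ 𝒲, ∃ Q : ∀ j, (B j ⊞ ∐ fun _ : I j => G) ⟶ G,
      (∀ j, biprod.lift (b j) 0 ≫ Q j = 0) ∧
      ∀ N ∈ 𝒲 ∩ 𝒴, ∀ j (g : (B j ⊞ ∐ fun _ : I j => G) ⟶ N), biprod.lift (b j) 0 ≫ g = 0 →
        ∃ u : G ⟶ N, Q j ≫ u = g := by
  choose C p wp hp hC using hb
  choose P D s r ws hs hP hD using fun j => hcog.2 (C j) (hC j)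
  refine ⟨absorber P I, h.sigma_mem_left fun x => hP x.1,
    fun j => biprod.map (p j ≫ s j) (𝟙 _) ≫ (absorberRetract P I j).i,
    fun j => ?_, fun N hN j g hg => ?_⟩
  · have : biprod.lift (b j) 0 ≫
        biprod.map (p j ≫ s j) (𝟙 (∐ fun _ : I j => absorber P I)) = 0 := by
      ext <;> simp [reassoc_of% wp j]
    rw [reassoc_of% this, zero_comp]
  · have := (hp j).epi_g
    obtain ⟨g₁, hg₁⟩ : ∃ g₁ : C j ⟶ N, p j ≫ g₁ = biprod.inl ≫ g :=
      ⟨(hp j).exact.desc _ (by simpa [biprod.lift_eq] using hg), (hp j).exact.g_desc _ _⟩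
    obtain ⟨g₂, hg₂⟩ := (hext _ (hD j) N hN).exists_extension (hs j) g₁
    refine ⟨(absorberRetract P I j).r ≫ biprod.desc g₂ (biprod.inr ≫ g), ?_⟩
    ext <;> simp [hg₁, hg₂]

end Absorber

section Hotel

variable {V : Type w} [Quiver.{w} V] {A : Type u} [Category.{v} A] [Abelian A]
  [HasCoproducts.{w} A] (E T : V → A) (G : A)

/-- The value at `j` of the representation into which a given one is embedded: `E j` receives the
given arrows into `j`, `T j` detects the cokernel of `phi`, and there is a copy of `G` for each
arrow into `j`. -/
noncomputable abbrev hotelObj (j : V) : A := (E j ⊞ T j) ⊞ ∐ fun _ : Σ k, k ⟶ j => G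

variable {E T G} {i j : V} {X : Paths V ⥤ A}

/-- The morphism along the arrow `a`: `ψ` into `E i`, and `Q` into the copy of `G` indexed by `a`.
The component into `T i` vanishes, so that `T i` splits off the cokernel of `phi`. -/
noncomputable abbrev hotelMap (a : j ⟶ i) (ψ : hotelObj E T G j ⟶ E i) (Q : hotelObj E T G j ⟶ G) :
    hotelObj E T G j ⟶ hotelObj E T G i :=
  biprod.lift (biprod.lift ψ 0) (Q ≫ Sigma.ι (fun _ : Σ k, k ⟶ i => G) ⟨j, a⟩)

/-- The embedding at the vertex `i` of a given representation into `hotelObj`. -/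
noncomputable abbrev hotelEmb (v : ∀ i, X.obj (vtx i) ⟶ E i) (c : ∀ i, X.obj (vtx i) ⟶ T i)
    (i : V) : X.obj (vtx i) ⟶ hotelObj E T G i :=
  biprod.lift (biprod.lift (v i) (c i)) 0

/-- The representation with values `hotelObj` and arrows `hotelMap`, into which a given one is
embedded. -/
noncomputable def hotelRep (ψ : ∀ {j i : V}, (j ⟶ i) → (hotelObj E T G j ⟶ E i))
    (Q : ∀ j, hotelObj E T G j ⟶ G) : Paths V ⥤ A :=
  Paths.lift { obj := hotelObj E T G, map := fun {j _} a => hotelMap a (ψ a) (Q j) }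

variable {ψ : ∀ {j i : V}, (j ⟶ i) → (hotelObj E T G j ⟶ E i)} {Q : ∀ j, hotelObj E T G j ⟶ G}

theorem hotelRep_map_toPath (a : j ⟶ i) :
    (hotelRep ψ Q).map a.toPath = hotelMap a (ψ a) (Q j) :=
  Paths.lift_toPath _ a

theorem ι_comp_phi_hotelRep_comp (p : Σ j : V, j ⟶ i) {N : A} (d : hotelObj E T G i ⟶ N) :
    Sigma.ι (fun p : Σ j : V, j ⟶ i => (hotelRep ψ Q).obj (vtx p.1)) p ≫
      phi (hotelRep ψ Q) i ≫ d = hotelMap p.2 (ψ p.2) (Q p.1) ≫ d :=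
  ((reassoc_of% ι_comp_phi (hotelRep (fun {_ _} => ψ) Q) p) d).trans
    (congrArg (· ≫ d) (hotelRep_map_toPath p.2))

theorem phi_hotelRep_comp_fst_snd (i : V) :
    phi (hotelRep ψ Q) i ≫ (biprod.fst ≫ biprod.snd : hotelObj E T G i ⟶ T i) = 0 := by
  refine Limits.Sigma.hom_ext _ _ fun p => (ι_comp_phi_hotelRep_comp p _).trans ?_
  have : hotelMap p.2 (ψ p.2) (Q p.1) ≫ biprod.fst ≫ biprod.snd = 0 := by simp
  exact this.trans comp_zero.symm

variable {v : ∀ i, X.obj (vtx i) ⟶ E i} {c : ∀ i, X.obj (vtx i) ⟶ T i}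

/-- `hotelEmb` as a morphism of representations. -/
noncomputable def toHotelRep (hc : ∀ {j i : V} (a : j ⟶ i), X.map a.toPath ≫ c i = 0)
    (hψ : ∀ {j i : V} (a : j ⟶ i), hotelEmb v c j ≫ ψ a = X.map a.toPath ≫ v i)
    (hQ : ∀ j, hotelEmb v c j ≫ Q j = 0) : X ⟶ hotelRep ψ Q :=
  Paths.liftNatTrans (fun i => hotelEmb v c i) fun {j i} a => by
    have : X.map a.toPath ≫ hotelEmb v c i = hotelEmb v c j ≫ hotelMap a (ψ a) (Q j) := by
      ext <;> simp [hc, hψ, reassoc_of% hQ]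
    rw [hotelRep_map_toPath]
    exact this

theorem hasExtensions_phi_hotelRep {S : Set A} (hX : HasExtensions S (phi X i))
    (hv : HasExtensions S (v i))
    (hψ : ∀ {j i : V} (a : j ⟶ i), hotelEmb v c j ≫ ψ a = X.map a.toPath ≫ v i)
    (hQ : ∀ N ∈ S, ∀ j (g : hotelObj E T G j ⟶ N), hotelEmb v c j ≫ g = 0 → ∃ u, Q j ≫ u = g) :
    HasExtensions S (phi (hotelRep ψ Q) i) := by
  intro N hN g
  let gₚ (p : Σ j : V, j ⟶ i) : hotelObj E T G p.1 ⟶ N :=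
    Sigma.ι (fun p : Σ j : V, j ⟶ i => (hotelRep ψ Q).obj (vtx p.1)) p ≫ g
  obtain ⟨h, hh⟩ := hX N hN (Limits.Sigma.desc fun p => hotelEmb v c p.1 ≫ gₚ p)
  obtain ⟨k, hk⟩ := hv N hN h
  have hkill (p : Σ j : V, j ⟶ i) : hotelEmb v c p.1 ≫ (gₚ p - ψ p.2 ≫ k) = 0 := by
    have hp : (hotelEmb v c p.1 ≫ ψ p.2) ≫ k = hotelEmb v c p.1 ≫ gₚ p := calc
      _ = X.map p.2.toPath ≫ v i ≫ k := (congrArg (· ≫ k) (hψ p.2)).trans (Category.assoc _ _ _)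
      _ = _ := by rw [hk, ← reassoc_of% ι_comp_phi X p, hh, Sigma.ι_desc]
    rw [Preadditive.comp_sub, ← hp, Category.assoc, sub_self]
  choose u hu using fun p => hQ N hN p.1 _ (hkill p)
  refine ⟨biprod.desc (biprod.desc k 0) (Limits.Sigma.desc u),
    Limits.Sigma.hom_ext _ _ fun p => (ι_comp_phi_hotelRep_comp p _).trans ?_⟩
  have : hotelMap p.2 (ψ p.2) (Q p.1) ≫ biprod.desc (biprod.desc k 0) (Limits.Sigma.desc u) =
      gₚ p := by
    simp [biprod.lift_desc, hu]
  exact this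

end Hotel

section Embedding

variable {A : Type u} [Category.{v} A] [Abelian A] [HasCoproducts.{w} A] {V : Type w}
  [Quiver.{w} V] {𝒲 𝒳 𝒴 : Set A}

theorem hotelRep_mem_phiClass (h : IsCotorsionPair 𝒲 𝒴) (hc : IsCompleteCP 𝒲 𝒴) {E T : V → A}
    (hE : ∀ i, E i ∈ 𝒲) (hT : ∀ i, T i ∈ 𝒲) {G : A} (hG : G ∈ 𝒲)
    {ψ : ∀ {j i : V}, (j ⟶ i) → (hotelObj E T G j ⟶ E i)} {Q : ∀ j, hotelObj E T G j ⟶ G}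
    (hφ : ∀ i, HasExtensions (𝒲 ∩ 𝒴) (phi (hotelRep ψ Q) i)) :
    hotelRep ψ Q ∈ PhiClass (V := V) 𝒲 := by
  intro i
  have hobj (j : V) : (hotelRep ψ Q).obj (vtx j) ∈ 𝒲 :=
    h.biprod_mem_left (h.biprod_mem_left (hE j) (hT j)) (h.sigma_mem_left fun _ => hG)
  have hφ𝒴 : HasExtensions 𝒴 (phi (hotelRep ψ Q) i) :=
    h.hasExtensions_of_core hc (h.sigma_mem_left fun p => hobj p.1) (hφ i)
  exact ⟨hc.mono_of_hasExtensions hφ𝒴, hobj i, h.cokernel_mem_left (hobj i) hφ𝒴⟩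

theorem isMonoWithCokernelIn_of_app_eq_hotelEmb (h : IsCotorsionPair 𝒲 𝒴)
    (h𝒳 : IsClosedUnderExtensions 𝒳) (h𝒲𝒳 : 𝒲 ⊆ 𝒳) {E T : V → A} {G : A} {X : Paths V ⥤ A}
    {v : ∀ i, X.obj (vtx i) ⟶ E i} {t : ∀ i, cokernel (phi X i) ⟶ T i}
    {ψ : ∀ {j i : V}, (j ⟶ i) → (hotelObj E T G j ⟶ E i)} {Q : ∀ j, hotelObj E T G j ⟶ G}
    (hrep : hotelRep ψ Q ∈ PhiClass (V := V) 𝒲) (ht : ∀ i, IsMonoWithCokernelIn 𝒳 (t i))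
    {f : X ⟶ hotelRep ψ Q}
    (happ : ∀ i, f.app (vtx i) = hotelEmb v (fun i => cokernel.π (phi X i) ≫ t i) i)
    (hf : ∀ i, IsMonoWithCokernelIn 𝒳 (f.app (vtx i))) :
    IsMonoWithCokernelIn (PhiClass (V := V) 𝒳) f := by
  have (i : Paths V) : Mono (f.app i) := (hf i).mono
  have : Mono f := NatTrans.mono_of_mono_app f
  have hS : (ShortComplex.mk f (cokernel.π f) (cokernel.condition f)).ShortExact :=
    .mk' (ShortComplex.exact_cokernel f) this (inferInstanceAs (Epi (cokernel.π f)))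
  refine .of_cokernel_mem f (mem_phiClass_of_shortExact h𝒳 (h𝒲𝒳 h.zero_mem) hS
    (fun i => (hrep i).1) hf fun i => ?_)
  let τ : hotelObj E T G i ⟶ T i := biprod.fst ≫ biprod.snd
  let s : T i ⟶ hotelObj E T G i := biprod.inr ≫ biprod.inl
  have hs : s ≫ τ = 𝟙 (T i) := by simp [s, τ]
  have hτ : hotelEmb v (fun i => cokernel.π (phi X i) ≫ t i) i ≫ τ =
      cokernel.π (phi X i) ≫ t i := by simp [τ]
  exact h.isMonoWithCokernelIn_cokernelMap h𝒳 h𝒲𝒳 _ (hrep i).2.2 hs (phi_hotelRep_comp_fst_snd i)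
    (ht i) ((congrArg (· ≫ τ) (happ i)).trans hτ)

theorem exists_isMonoWithCokernelIn_phiClass (h : IsCotorsionPair 𝒲 𝒴) (hc : IsCompleteCP 𝒲 𝒴)
    (h𝒳 : IsClosedUnderExtensions 𝒳) (hext : ∀ X ∈ 𝒳, ∀ N ∈ 𝒲 ∩ 𝒴, ext1Zero X N)
    (hcog : IsCogenerator 𝒲 𝒳) {X : Paths V ⥤ A} (hX : X ∈ PhiClass (V := V) 𝒳) :
    ∃ W ∈ PhiClass (V := V) 𝒲, ∃ f : X ⟶ W, IsMonoWithCokernelIn (PhiClass (V := V) 𝒳) f := by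
  choose E hE v hv using fun i : V => exists_isMonoWithCokernelIn_core h hc h𝒳 hcog (hX i).2.1
  choose T hT t ht using fun i : V => exists_isMonoWithCokernelIn_core h hc h𝒳 hcog (hX i).2.2
  let c (i : V) : X.obj (vtx i) ⟶ T i := cokernel.π (phi X i) ≫ t i
  have hφX (i : V) : HasExtensions (𝒲 ∩ 𝒴) (phi X i) :=
    have := (hX i).1
    (IsMonoWithCokernelIn.of_cokernel_mem _ (hX i).2.2).hasExtensions hext
  have hb (i : V) : IsMonoWithCokernelIn 𝒳 (biprod.lift (v i) (c i)) :=
    .of_comp_biprod_fst h𝒳 (hcog.1 (hT i).1) (by simpa using hv i)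
  obtain ⟨G, hG, Q, hQ, hQu⟩ :=
    exists_absorbing_cokernel h hcog hext hb fun i => Σ j, j ⟶ i
  have hemb (i : V) : IsMonoWithCokernelIn 𝒳 (hotelEmb v c i) :=
    .of_comp_biprod_fst h𝒳 (hcog.1 (h.sigma_mem_left fun _ => hG)) (by simpa using hb i)
  choose ψ hψ using fun (j i : V) (a : j ⟶ i) =>
    (hemb j).hasExtensions hext (E i) (hE i) (X.map a.toPath ≫ v i)
  have hcX {j i : V} (a : j ⟶ i) : X.map a.toPath ≫ c i = 0 := by
    rw [← ι_comp_phi X ⟨j, a⟩, Category.assoc, cokernel.condition_assoc, zero_comp, comp_zero]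
  have hrep : hotelRep (ψ _ _) Q ∈ PhiClass (V := V) 𝒲 :=
    hotelRep_mem_phiClass h hc (fun i => (hE i).1) (fun i => (hT i).1) hG fun i =>
      hasExtensions_phi_hotelRep (hφX i) ((hv i).hasExtensions hext) (hψ _ _) hQu
  exact ⟨_, hrep, toHotelRep hcX (hψ _ _) hQ,
    isMonoWithCokernelIn_of_app_eq_hotelEmb h h𝒳 hcog.1 hrep ht (fun _ => rfl) hemb⟩

end Embedding

end QuiverGF

theorem stmt11_general {A : Type u} [Category.{v} A] [Abelian A] [HasCoproducts.{w} A]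
    (V : Type w) [Quiver.{w} V] (𝒲 𝒳 𝒴 : Set A)
    (hXext : IsClosedUnderExtensions 𝒳)
    (hcp : IsCotorsionPair 𝒲 𝒴) (hcomp : IsCompleteCP 𝒲 𝒴)
    (hext : ∀ X ∈ 𝒳, ∀ W ∈ 𝒲 ∩ 𝒴, ext1Zero X W) (hcog : IsCogenerator 𝒲 𝒳) :
    IsCogenerator (PhiClass (V := V) 𝒲) (PhiClass (V := V) 𝒳) := by
  refine ⟨fun W hW i => ⟨(hW i).1, hcog.1 (hW i).2.1, hcog.1 (hW i).2.2⟩, fun X hX => ?_⟩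
  obtain ⟨W, hW, f, Y, g, w, hS, hY⟩ :=
    exists_isMonoWithCokernelIn_phiClass hcp hcomp hXext hext hcog hX
  exact ⟨W, Y, f, g, w, hS, hW, hY⟩

theorem stmt11 (R : Type u) [Ring R] (V : Type u) [Quiver.{u} V] (hV : LeftRooted V)
    (𝒲 𝒳 : Set (ModuleCat.{u} R))
    (hXext : ∀ (S : ShortComplex (ModuleCat.{u} R)), S.ShortExact →
      S.X₁ ∈ 𝒳 → S.X₃ ∈ 𝒳 → S.X₂ ∈ 𝒳)
    (hcp : IsCotorsionPair 𝒲 (rightPerp 𝒲)) (hcomp : IsCompleteCP 𝒲 (rightPerp 𝒲))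
    (hext : ∀ X ∈ 𝒳, ∀ W ∈ 𝒲 ∩ rightPerp 𝒲, ext1Zero X W)
    (hcog : IsCogenerator 𝒲 𝒳) :
    IsCogenerator (PhiClass (V := V) 𝒲) (PhiClass (V := V) 𝒳) :=
  stmt11_general V 𝒲 𝒳 (rightPerp 𝒲) hXext hcp hcomp hext hcog

end Statements
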